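/- Let F be an algebraically closed field, A a finitely generated commutative F-algebra, and n a natural number. Then the map from the quotient of (AlgHom_F(A, F))^n by the permutation action of the symmetric group S_n to AlgHom_F(TS^n_F(A), F), induced by sending an n-tuple of characters (χ_1, …, χ_n) to the restriction to TS^n_F(A) of the F-algebra homomorphism χ_1 ⊗ ⋯ ⊗ χ_n : A^{⊗n} → F, is a well-defined bijection. (Equivalently, the F-points of the n-th symmetric product X^{(n)} = Spec TS^n_F(A) correspond bijectively to equivalence classes of semisimple n-dimensional linear representations of A.) -/

import Mathlib

open scoped TensorProduct
open PiTensorProduct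

universe u v w

namespace SymmetricProduct

variable (F : Type u) [Field F] [IsAlgClosed F] (A : Type v) [CommRing A] [Algebra F A] (n : ℕ)

/-- The algebra homomorphism on the `n`-fold tensor power permuting factors by `σ`. -/
noncomputable def permHom (σ : Equiv.Perm (Fin n)) :
    (⨂[F] _ : Fin n, A) →ₐ[F] (⨂[F] _ : Fin n, A) :=
  PiTensorProduct.liftAlgHom (MultilinearMap.domDomCongr σ (PiTensorProduct.tprod F))
    (by simp [MultilinearMap.domDomCongr_apply]; rfl)
    (fun x y => by
      simp only [MultilinearMap.domDomCongr_apply]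
      rw [tprod_mul_tprod]; rfl)

@[simp] lemma permHom_tprod (σ : Equiv.Perm (Fin n)) (x : Fin n → A) :
    permHom F A n σ (tprod F x) = tprod F (fun i => x (σ i)) := by
  simp [permHom]

/-- `TS^n_F(A)`: the subalgebra of symmetric tensors in the `n`-fold tensor power of `A`. -/
noncomputable def TS : Subalgebra F (⨂[F] _ : Fin n, A) where
  carrier := {x | ∀ σ : Equiv.Perm (Fin n), permHom F A n σ x = x}
  mul_mem' := fun hx hy σ => by rw [_root_.map_mul, hx σ, hy σ]
  add_mem' := fun hx hy σ => by rw [_root_.map_add, hx σ, hy σ]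
  one_mem' := fun σ => map_one _
  algebraMap_mem' := fun r σ => AlgHom.commutes _ r

/-- `e_i^n(a)`: the sum over `i`-element subsets `S` of `Fin n` of the elementary tensors
having `a` in the slots of `S` and `1` elsewhere. -/
noncomputable def esym (i : ℕ) (a : A) : ⨂[F] _ : Fin n, A :=
  ∑ S ∈ Finset.powersetCard i (Finset.univ : Finset (Fin n)),
    tprod F (fun j => if j ∈ S then a else 1)

lemma esym_mem (i : ℕ) (a : A) : esym F A n i a ∈ TS F A n := by
  intro σ
  rw [esym, map_sum]
  simp only [permHom_tprod]
  refine Finset.sum_nbij' (fun S => S.map σ.symm.toEmbedding)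
    (fun S => S.map σ.toEmbedding) ?_ ?_ ?_ ?_ ?_
  · intro S hS
    simp only [Finset.mem_powersetCard_univ, Finset.card_map] at hS ⊢
    exact hS
  · intro S hS
    simp only [Finset.mem_powersetCard_univ, Finset.card_map] at hS ⊢
    exact hS
  · intro S hS
    ext j
    simp
  · intro S hS
    ext j
    simp
  · intro S hS
    congr 1
    funext j
    have hiff : (σ j ∈ S) ↔ (j ∈ Finset.map σ.symm.toEmbedding S) := by
      constructor
      · intro h
        exact Finset.mem_map.2 ⟨σ j, h, σ.symm_apply_apply j⟩
      · intro h
        obtain ⟨s, hs, rfl⟩ := Finset.mem_map.1 h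
        simpa using hs
    simp only [hiff]

/-- `e_i^n(a)` as an element of `TS^n_F(A)`. -/
noncomputable def esymT (i : ℕ) (a : A) : TS F A n := ⟨esym F A n i a, esym_mem F A n i a⟩

lemma tprod_const_mem (a : A) : (tprod F (fun _ : Fin n => a)) ∈ TS F A n := fun σ => by
  simp

/-- `a^{⊗ n}` as an element of `TS^n_F(A)`. -/
noncomputable def tpow (a : A) : TS F A n := ⟨tprod F (fun _ : Fin n => a), tprod_const_mem F A n a⟩


/-- The character `χ_1 ⊗ ⋯ ⊗ χ_n : A^{⊗n} → F` attached to a family of characters of `A`. -/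
noncomputable def tensorChar (χ : Fin n → (A →ₐ[F] F)) : (⨂[F] _ : Fin n, A) →ₐ[F] F :=
  PiTensorProduct.liftAlgHom
    ((MultilinearMap.mkPiAlgebra F (Fin n) F).compLinearMap (fun i => (χ i).toLinearMap))
    (by simp)
    (fun x y => by simp [Finset.prod_mul_distrib])

/-!
`TS^n_F(A)` is the ring of invariants of the finite group `S_n` acting on `A^{⊗n}`, so `A^{⊗n}` is
integral over it. By lying over, and because `F` is algebraically closed, every character of
`TS^n_F(A)` extends to `A^{⊗n}`. Since `S_n` permutes transitively the primes of `A^{⊗n}` over a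
given prime of `TS^n_F(A)`, and a character is determined by its kernel, two extensions of the same
character differ by a permutation. Finally, the characters of `A^{⊗n}` are exactly the
`χ_1 ⊗ ⋯ ⊗ χ_n`, for a unique tuple of characters of `A`.
-/

section FiniteGroupInvariants

theorem nonempty_algHom_of_isIntegral_of_isAlgClosed (R S Ω : Type*) [CommRing R] [CommRing S]
    [Algebra R S] [Algebra.IsIntegral R S] [FaithfulSMul R S] [Field Ω] [IsAlgClosed Ω]
    [Algebra R Ω] : Nonempty (S →ₐ[R] Ω) := by
  let p : Ideal R := RingHom.ker (algebraMap R Ω)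
  have : p.IsPrime := RingHom.ker_isPrime _
  obtain ⟨q, _, _⟩ := Ideal.nonempty_primesOver (S := S) p
  let _ : Algebra (R ⧸ p) Ω := (RingHom.kerLift (algebraMap R Ω)).toAlgebra
  have : IsScalarTower R (R ⧸ p) Ω := .of_algebraMap_eq fun _ => rfl
  have : FaithfulSMul (R ⧸ p) Ω :=
    (faithfulSMul_iff_algebraMap_injective _ _).2 (RingHom.kerLift_injective _)
  have : Module.IsTorsionFree (R ⧸ p) (S ⧸ q) :=
    Module.isTorsionFree_iff_faithfulSMul.2 inferInstance
  let embed : S ⧸ q →ₐ[R ⧸ p] Ω := IsAlgClosed.lift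
  exact ⟨(embed.restrictScalars R).comp (Ideal.Quotient.mkₐ R q)⟩

theorem exists_algHom_extension_of_isIntegral {K R S Ω : Type*} [CommRing K] [CommRing R]
    [CommRing S] [Algebra K R] [Algebra K S] [Algebra R S] [IsScalarTower K R S]
    [Algebra.IsIntegral R S] [FaithfulSMul R S] [Field Ω] [IsAlgClosed Ω] [Algebra K Ω]
    (φ : R →ₐ[K] Ω) : ∃ ψ : S →ₐ[K] Ω, ψ.comp (IsScalarTower.toAlgHom K R S) = φ := by
  let _ : Algebra R Ω := φ.toAlgebra
  have : IsScalarTower K R Ω := .of_algebraMap_eq fun c => (φ.commutes c).symm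
  obtain ⟨ψ⟩ := nonempty_algHom_of_isIntegral_of_isAlgClosed R S Ω
  exact ⟨ψ.restrictScalars K, AlgHom.ext ψ.commutes⟩

theorem algHom_eq_of_ker_le_ker {K B : Type*} [CommRing K] [Ring B] [Algebra K B] {f g : B →ₐ[K] K}
    (h : RingHom.ker f ≤ RingHom.ker g) : f = g := by
  ext b
  have hb : b - algebraMap K B (f b) ∈ RingHom.ker f := by simp [RingHom.mem_ker]
  have hgb : g b - f b = 0 := by simpa [RingHom.mem_ker] using h hb
  exact (sub_eq_zero.1 hgb).symm

theorem exists_algHom_apply_eq_apply_smul {K R B : Type*} (G : Type*) [CommRing K] [IsDomain K]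
    [CommRing R] [CommRing B] [Algebra K B] [Algebra R B] [Group G] [Finite G]
    [MulSemiringAction G B] [SMulCommClass G R B] [SMulCommClass G K B]
    [Algebra.IsInvariant R B G] {f g : B →ₐ[K] K}
    (h : ∀ r, f (algebraMap R B r) = g (algebraMap R B r)) : ∃ σ : G, ∀ b, f b = g (σ • b) := by
  have := RingHom.ker_isPrime f
  have := RingHom.ker_isPrime g
  have hunder : (RingHom.ker f).under R = (RingHom.ker g).under R := by
    ext r
    simp [Ideal.mem_comap, RingHom.mem_ker, h]
  obtain ⟨σ, hσ⟩ := Algebra.IsInvariant.exists_smul_of_under_eq R B G _ _ hunder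
  have hker : RingHom.ker f ≤ RingHom.ker (g.comp (MulSemiringAction.toAlgHom K B σ)) :=
    fun b hb => show σ • b ∈ RingHom.ker g from
      hσ ▸ Ideal.smul_mem_pointwise_smul σ b (RingHom.ker f) hb
  exact ⟨σ, DFunLike.congr_fun (algHom_eq_of_ker_le_ker hker)⟩

end FiniteGroupInvariants

section TensorPower

omit [IsAlgClosed F]

variable {F A n}

theorem permHom_comp_singleAlgHom (σ : Equiv.Perm (Fin n)) (i : Fin n) :
    (permHom F A n σ).comp (singleAlgHom i) = singleAlgHom (A := fun _ => A) (σ.symm i) := by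
  ext a
  have hslot : (fun j => Pi.mulSingle (M := fun _ => A) i a (σ j)) = Pi.mulSingle (σ.symm i) a :=
    Pi.mulSingle_comp_equiv σ i a
  simp [permHom, hslot]

theorem permHom_mul (σ τ : Equiv.Perm (Fin n)) :
    permHom F A n (σ * τ) = (permHom F A n τ).comp (permHom F A n σ) := by
  refine algHom_ext fun i => ?_
  simp only [AlgHom.comp_assoc, permHom_comp_singleAlgHom]
  rfl

theorem permHom_one : permHom F A n 1 = AlgHom.id F _ :=
  algHom_ext fun i => permHom_comp_singleAlgHom 1 i

theorem tensorChar_tprod (χ : Fin n → (A →ₐ[F] F)) (x : Fin n → A) :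
    tensorChar F A n χ (tprod F x) = ∏ i, χ i (x i) :=
  lift.tprod x

theorem tensorChar_comp_singleAlgHom (χ : Fin n → (A →ₐ[F] F)) (i : Fin n) :
    (tensorChar F A n χ).comp (singleAlgHom i) = χ i := by
  ext a
  simp [tensorChar_tprod, Pi.mulSingle_apply, apply_ite]

theorem tensorChar_injective : Function.Injective (tensorChar F A n) := fun χ χ' h =>
  funext fun i => by rw [← tensorChar_comp_singleAlgHom χ, h, tensorChar_comp_singleAlgHom]

theorem tensorChar_surjective : Function.Surjective (tensorChar F A n) := fun ψ =>
  ⟨fun i => ψ.comp (singleAlgHom (A := fun _ => A) i),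
    algHom_ext fun i => tensorChar_comp_singleAlgHom _ i⟩

theorem tensorChar_comp_permHom (χ : Fin n → (A →ₐ[F] F)) (σ : Equiv.Perm (Fin n)) :
    (tensorChar F A n χ).comp (permHom F A n σ) = tensorChar F A n (χ ∘ σ.symm) := by
  refine algHom_ext fun i => ?_
  simp only [AlgHom.comp_assoc, permHom_comp_singleAlgHom, tensorChar_comp_singleAlgHom,
    Function.comp_apply]

/-- The left action of `S_n` on `A^{⊗n}` by permutation of the tensor factors. Since `permHom`
reverses products, `σ` acts through `permHom σ⁻¹`. -/
noncomputable scoped instance permAction :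
    MulSemiringAction (Equiv.Perm (Fin n)) (⨂[F] _ : Fin n, A) where
  smul σ x := permHom F A n σ⁻¹ x
  one_smul := DFunLike.congr_fun permHom_one
  mul_smul σ τ x := by
    change permHom F A n (σ * τ)⁻¹ x = permHom F A n σ⁻¹ (permHom F A n τ⁻¹ x)
    rw [mul_inv_rev, permHom_mul, AlgHom.comp_apply]
  smul_zero σ := map_zero (permHom F A n σ⁻¹)
  smul_add σ := map_add (permHom F A n σ⁻¹)
  smul_one σ := map_one (permHom F A n σ⁻¹)
  smul_mul σ := map_mul (permHom F A n σ⁻¹)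

theorem perm_smul_eq (σ : Equiv.Perm (Fin n)) (x : ⨂[F] _ : Fin n, A) :
    σ • x = permHom F A n σ⁻¹ x :=
  rfl

theorem mem_TS_iff {x : ⨂[F] _ : Fin n, A} :
    x ∈ TS F A n ↔ ∀ σ : Equiv.Perm (Fin n), σ • x = x :=
  ⟨fun hx σ => hx σ⁻¹, fun hx σ => by simpa only [perm_smul_eq, inv_inv] using hx σ⁻¹⟩

scoped instance : Algebra.IsInvariant (TS F A n) (⨂[F] _ : Fin n, A) (Equiv.Perm (Fin n)) where
  isInvariant x hx := ⟨⟨x, mem_TS_iff.2 hx⟩, rfl⟩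

scoped instance : SMulCommClass (Equiv.Perm (Fin n)) F (⨂[F] _ : Fin n, A) where
  smul_comm σ c x := map_smul (permHom F A n σ⁻¹) c x

scoped instance : SMulCommClass (Equiv.Perm (Fin n)) (TS F A n) (⨂[F] _ : Fin n, A) where
  smul_comm σ s x := by
    simp only [Algebra.smul_def, smul_mul']
    exact congrArg (· * σ • x) (mem_TS_iff.1 s.2 σ)

scoped instance : Algebra.IsIntegral (TS F A n) (⨂[F] _ : Fin n, A) :=
  Algebra.IsInvariant.isIntegral _ _ (Equiv.Perm (Fin n))

theorem tensorChar_comp_perm_comp_val_eq (χ : Fin n → (A →ₐ[F] F)) (σ : Equiv.Perm (Fin n)) :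
    (tensorChar F A n (χ ∘ σ)).comp (TS F A n).val = (tensorChar F A n χ).comp (TS F A n).val := by
  ext s
  have hs : permHom F A n σ.symm s = s := s.2 σ.symm
  have hχ := DFunLike.congr_fun (tensorChar_comp_permHom χ σ.symm) (s : ⨂[F] _ : Fin n, A)
  rw [AlgHom.comp_apply, hs] at hχ
  exact hχ.symm

theorem exists_perm_of_tensorChar_comp_val_eq {χ χ' : Fin n → (A →ₐ[F] F)}
    (h : (tensorChar F A n χ).comp (TS F A n).val = (tensorChar F A n χ').comp (TS F A n).val) :
    ∃ σ : Equiv.Perm (Fin n), χ' = χ ∘ σ := by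
  obtain ⟨σ, hσ⟩ := exists_algHom_apply_eq_apply_smul (Equiv.Perm (Fin n))
    (R := TS F A n) (f := tensorChar F A n χ') (g := tensorChar F A n χ)
    (DFunLike.congr_fun h.symm)
  have hperm : tensorChar F A n χ' = tensorChar F A n (χ ∘ σ) := by
    rw [← inv_inv σ, Equiv.Perm.inv_def, ← tensorChar_comp_permHom]
    exact AlgHom.ext hσ
  exact ⟨σ, tensorChar_injective hperm⟩

end TensorPower

theorem tensorChar_comp_val_surjective : Function.Surjective
    (fun χ : Fin n → (A →ₐ[F] F) => (tensorChar F A n χ).comp (TS F A n).val) := by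
  intro φ
  obtain ⟨ψ, hψ⟩ := exists_algHom_extension_of_isIntegral (S := ⨂[F] _ : Fin n, A) φ
  obtain ⟨χ, rfl⟩ := tensorChar_surjective ψ
  exact ⟨χ, hψ⟩

theorem ts_points_eq_tuples_of_characters_up_to_permutation_general :
    Function.Surjective
        (fun χ : Fin n → (A →ₐ[F] F) => (tensorChar F A n χ).comp (TS F A n).val) ∧
      ∀ χ χ' : Fin n → (A →ₐ[F] F),
        (tensorChar F A n χ).comp (TS F A n).val = (tensorChar F A n χ').comp (TS F A n).val
          ↔ ∃ σ : Equiv.Perm (Fin n), χ' = χ ∘ σ := by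
  refine ⟨tensorChar_comp_val_surjective F A n,
    fun χ χ' => ⟨exists_perm_of_tensorChar_comp_val_eq, ?_⟩⟩
  rintro ⟨σ, rfl⟩
  exact (tensorChar_comp_perm_comp_val_eq χ σ).symm

/-- **Points of the symmetric product.** Over an algebraically closed field `F`, the map
sending an `n`-tuple `(χ_1, …, χ_n)` of characters of a finitely generated commutative
`F`-algebra `A` to the restriction of `χ_1 ⊗ ⋯ ⊗ χ_n` to `TS^n_F(A)` is surjective, and two
tuples have the same image iff they differ by a permutation; i.e. it induces a well-defined
bijection from `(AlgHom_F(A,F))^n / S_n` onto `AlgHom_F(TS^n_F(A), F)`. -/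
theorem ts_points_eq_tuples_of_characters_up_to_permutation [Algebra.FiniteType F A] :
    Function.Surjective
        (fun χ : Fin n → (A →ₐ[F] F) => (tensorChar F A n χ).comp (TS F A n).val) ∧
      ∀ χ χ' : Fin n → (A →ₐ[F] F),
        (tensorChar F A n χ).comp (TS F A n).val = (tensorChar F A n χ').comp (TS F A n).val
          ↔ ∃ σ : Equiv.Perm (Fin n), χ' = χ ∘ σ := by
  exact ts_points_eq_tuples_of_characters_up_to_permutation_general F A n

end SymmetricProduct
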